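/- Let (X,S) be a non-degenerate symmetric set-theoretic solution of the quantum Yang–Baxter equation with X finite. Then the map π : G(X,S) → ℤ^X is a bijection, and it satisfies the cocycle identity π(a₁ a₂) = σ(a₂⁻¹)(π(a₁)) + π(a₂) for all a₁, a₂ ∈ G(X,S), where σ(g) ∈ Sym(X) denotes the Sym(X)-component of φ(g) acting on ℤ^X by permuting the basis. -/

import Mathlib

namespace YB

variable {X : Type*}

/-- `gmap S x y = g_x(y)`, the first component of `S (x, y)`. -/
def gmap (S : X × X → X × X) (x y : X) : X := (S (x, y)).1

/-- `fmap S y x = f_y(x)`, the second component of `S (x, y)`. -/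
def fmap (S : X × X → X × X) (y x : X) : X := (S (x, y)).2

/-- Non-degeneracy: each `f_x` and each `g_x` is bijective. -/
def Nondeg (S : X × X → X × X) : Prop :=
  ∀ x : X, Function.Bijective (fmap S x) ∧ Function.Bijective (gmap S x)

/-- Involutivity: `S ∘ S = id`. -/
def Involutive (S : X × X → X × X) : Prop := ∀ p : X × X, S (S p) = p

/-- `S` acting on the first two components of `X³`. -/
def S12 (S : X × X → X × X) : X × X × X → X × X × X :=
  fun p => ((S (p.1, p.2.1)).1, (S (p.1, p.2.1)).2, p.2.2)

/-- `S` acting on the last two components of `X³`. -/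
def S23 (S : X × X → X × X) : X × X × X → X × X × X :=
  fun p => (p.1, S (p.2.1, p.2.2))

/-- The braid relation `S¹² S²³ S¹² = S²³ S¹² S²³`. -/
def Braided (S : X × X → X × X) : Prop :=
  S12 S ∘ S23 S ∘ S12 S = S23 S ∘ S12 S ∘ S23 S

/-- The trivial solution: all `f_x` and `g_x` are the identity. -/
def IsTrivialSol (S : X × X → X × X) : Prop :=
  ∀ x : X, fmap S x = id ∧ gmap S x = id

/-- The defining relators `x y (g_x(y) f_y(x))⁻¹` of the structure group. -/
def rels (S : X × X → X × X) : Set (FreeGroup X) :=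
  {r | ∃ x y : X, r = FreeGroup.of x * FreeGroup.of y *
      (FreeGroup.of (gmap S x y) * FreeGroup.of (fmap S y x))⁻¹}

/-- The structure group `G(X,S) = ⟨X ∣ x y = g_x(y) f_y(x)⟩`. -/
abbrev StructureGroup (S : X × X → X × X) := PresentedGroup (rels S)

/-- A permutation `σ` of `X` acts on the free abelian group `ℤ^X` by permuting the
basis: `σ • t_x = t_{σ x}` (i.e. `(σ • w) i = w (σ⁻¹ i)`). -/
def permAddAut (σ : Equiv.Perm X) : (X → ℤ) ≃+ (X → ℤ) where
  toFun w := w ∘ σ.symm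
  invFun w := w ∘ σ
  left_inv w := by funext i; simp
  right_inv w := by funext i; simp
  map_add' a b := rfl

/-- The action of `Sym(X)` on `ℤ^X` (written multiplicatively) by permuting the basis,
as a homomorphism `Sym(X) →* Aut(ℤ^X)`. -/
def permHom : Equiv.Perm X →* MulAut (Multiplicative (X → ℤ)) where
  toFun σ := AddEquiv.toMultiplicative (permAddAut σ)
  map_one' := by apply MulEquiv.ext; intro w; rfl
  map_mul' σ τ := by apply MulEquiv.ext; intro w; rfl

/-- The basis element `t_x` of `ℤ^X` (written multiplicatively). -/
def tvec [DecidableEq X] (x : X) : Multiplicative (X → ℤ) :=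
  Multiplicative.ofAdd (Pi.single x 1)

/-- `f_x` as a permutation of `X` (given non-degeneracy). -/
noncomputable def fPerm (S : X × X → X × X) (hf : ∀ x : X, Function.Bijective (fmap S x))
    (x : X) : Equiv.Perm X :=
  Equiv.ofBijective _ (hf x)

/-- The element `f_x⁻¹ t_x` of `Sym(X) ⋉ ℤ^X`, the image of the generator `x` under the
homomorphism `φ` of Etingof–Schedler–Soloviev. -/
noncomputable def phiGen [DecidableEq X] (S : X × X → X × X)
    (hf : ∀ x : X, Function.Bijective (fmap S x)) (x : X) :
    Multiplicative (X → ℤ) ⋊[permHom] Equiv.Perm X :=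
  SemidirectProduct.inr (fPerm S hf x)⁻¹ * SemidirectProduct.inl (tvec x)

/-- Given `φ : G(X,S) → Sym(X) ⋉ ℤ^X`, `piMap φ g` is the `ℤ^X`-component `w` of
`φ g`, where `φ g = α · w` with `α ∈ Sym(X)`, `w ∈ ℤ^X`. -/
noncomputable def piMap {G : Type*} [Group G]
    (φ : G →* Multiplicative (X → ℤ) ⋊[permHom] Equiv.Perm X) (g : G) : X → ℤ :=
  Multiplicative.toAdd (permHom ((φ g).right)⁻¹ ((φ g).left))

/-!
Since `x y = g_x(y) f_y(x)`, the product `f_x⁻¹(y) x` in `G(X,S)` is symmetric in `x` and `y`. Hence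
the twisted left multiplications `a ↦ σ(a)(y) a`, one for each `y ∈ X`, commute with one another;
they are invertible because the diagonal map `x ↦ f_x⁻¹(x)` is. The cocycle identity says that `π`
carries them to the translations by `t_y`. So the free abelian group on `X` acts on `G(X,S)`, the
action is transitive because every left multiplication by a generator agrees pointwise with some
twisted one, and `π` inverts its orbit map at `1`.
-/

section CommutingPermutations

open scoped IsMulCommutative in
theorem exists_monoidHom_single_of_commute {ι H : Type*} [Group H] (p : ι → H)
    (hp : ∀ i j, Commute (p i) (p j)) :
    ∃ F : Multiplicative (ι →₀ ℤ) →* H, ∀ i, F (.ofAdd (Finsupp.single i 1)) = p i := by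
  let K := Subgroup.closure (Set.range p)
  have hK : ∀ a ∈ Set.range p, ∀ b ∈ Set.range p, a * b = b * a := by
    rintro _ ⟨i, rfl⟩ _ ⟨j, rfl⟩
    exact hp i j
  have : IsMulCommutative K := Subgroup.isMulCommutative_closure hK
  let q : ι → Additive K := fun i => .ofMul ⟨p i, Subgroup.subset_closure ⟨i, rfl⟩⟩
  refine ⟨K.subtype.comp (Finsupp.linearCombination ℤ q).toAddMonoidHom.toMultiplicativeLeft,
    fun i => ?_⟩
  simp [q]

variable {ι A M : Type*} [AddCommGroup M] {π : A → M}

theorem map_zpow_apply_eq_zsmul_add {p : Equiv.Perm A} {m : M} (h : ∀ a, π (p a) = m + π a)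
    (n : ℤ) (a : A) : π ((p ^ n) a) = n • m + π a := by
  induction n with
  | zero => simp
  | succ n ih =>
    rw [add_comm, zpow_one_add, Equiv.Perm.mul_apply, h, ih, add_zsmul, one_zsmul, add_assoc]
  | pred n ih =>
    have hn : π ((p ^ (-n : ℤ)) a) = m + π ((p ^ (-n - 1 : ℤ)) a) := by
      rw [← h, ← Equiv.Perm.mul_apply, ← zpow_one_add, add_sub_cancel]
    rw [sub_zsmul, one_zsmul, ← add_right_inj m, ← hn, ih]
    abel

theorem map_monoidHom_apply_eq_linearCombination_add {P : ι → Equiv.Perm A} {v : ι → M}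
    {F : Multiplicative (ι →₀ ℤ) →* Equiv.Perm A}
    (hF : ∀ i, F (.ofAdd (Finsupp.single i 1)) = P i) (hπ : ∀ i a, π (P i a) = v i + π a)
    (w : ι →₀ ℤ) (a : A) :
    π (F (.ofAdd w) a) = Finsupp.linearCombination ℤ v w + π a := by
  induction w using Finsupp.induction_linear generalizing a with
  | zero => simp
  | add w₁ w₂ ih₁ ih₂ =>
    rw [ofAdd_add, map_mul, Equiv.Perm.mul_apply, ih₁, ih₂, map_add, add_assoc]
  | single i n =>
    have hpow : F (.ofAdd (Finsupp.single i n)) = P i ^ n := by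
      rw [← hF, ← map_zpow, ← ofAdd_zsmul, Finsupp.smul_single, smul_eq_mul, mul_one]
    rw [hpow, map_zpow_apply_eq_zsmul_add (hπ i), Finsupp.linearCombination_single]

theorem exists_surjective_comp_eq_linearCombination {P : ι → Equiv.Perm A} {v : ι → M}
    (hP : ∀ i j, Commute (P i) (P j)) (hπ : ∀ i a, π (P i a) = v i + π a) {a₀ : A}
    (ha₀ : π a₀ = 0) (htrans : ∀ a, ∃ k ∈ Subgroup.closure (Set.range P), k a₀ = a) :
    ∃ o : (ι →₀ ℤ) → A, Function.Surjective o ∧ π ∘ o = Finsupp.linearCombination ℤ v := by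
  obtain ⟨F, hF⟩ := exists_monoidHom_single_of_commute P hP
  have hclosure : Subgroup.closure (Set.range P) ≤ F.range := by
    rw [Subgroup.closure_le]
    rintro _ ⟨i, rfl⟩
    exact ⟨_, hF i⟩
  refine ⟨fun w => F (.ofAdd w) a₀, fun a => ?_, funext fun w => ?_⟩
  · obtain ⟨k, hk, rfl⟩ := htrans a
    obtain ⟨w, rfl⟩ := hclosure hk
    exact ⟨w.toAdd, rfl⟩
  · rw [Function.comp_apply, map_monoidHom_apply_eq_linearCombination_add hF hπ, ha₀, add_zero]

end CommutingPermutations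

theorem range_linearCombination_single_one {R : Type*} [Semiring R] [DecidableEq X] :
    Set.range (Finsupp.linearCombination R fun x : X => (Pi.single x 1 : X → R)) =
      {w | (Function.support w).Finite} := by
  have hcoe (w : X →₀ R) :
      Finsupp.linearCombination R (fun x : X => (Pi.single x 1 : X → R)) w = w := by
    funext i
    simp [Finsupp.linearCombination_apply, Finsupp.sum, Pi.single_apply, eq_comm]
  ext w
  constructor
  · rintro ⟨w, rfl⟩
    rw [hcoe]
    exact w.hasFiniteSupport
  · intro hw
    exact ⟨Finsupp.ofSupportFinite w hw, hcoe _⟩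

section Cocycle

variable {G : Type*} [Group G] (φ : G →* Multiplicative (X → ℤ) ⋊[permHom] Equiv.Perm X)

theorem piMap_one : piMap φ 1 = 0 := by
  funext i
  simp [piMap]

theorem piMap_mul (a b : G) :
    piMap φ (a * b) = permAddAut (φ b⁻¹).right (piMap φ a) + piMap φ b := by
  have hcancel : permHom (φ (a * b)).right⁻¹ (permHom (φ a).right (φ b).left) =
      permHom (φ b).right⁻¹ (φ b).left := by
    rw [← MulAut.mul_apply, ← map_mul, map_mul φ, SemidirectProduct.mul_right, mul_inv_rev,
      inv_mul_cancel_right]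
  have hleft : permHom (φ (a * b)).right⁻¹ (φ a).left =
      permHom (φ b⁻¹).right (permHom (φ a).right⁻¹ (φ a).left) := by
    rw [← MulAut.mul_apply, ← map_mul, map_mul φ, map_inv φ, SemidirectProduct.mul_right,
      SemidirectProduct.inv_right, mul_inv_rev]
  rw [piMap, map_mul φ, SemidirectProduct.mul_left, ← map_mul φ, map_mul, hcancel, hleft]
  rfl

theorem permAddAut_single [DecidableEq X] (σ : Equiv.Perm X) (x : X) (n : ℤ) :
    permAddAut σ (Pi.single x n) = Pi.single (σ x) n := by
  funext i
  simp [permAddAut, Pi.single_apply, Equiv.symm_apply_eq]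

end Cocycle

section Generators

variable [DecidableEq X] {S : X × X → X × X} {hf : ∀ x, Function.Bijective (fmap S x)}

theorem piMap_eq_single_one_of_eq_phiGen {G : Type*} [Group G]
    {φ : G →* Multiplicative (X → ℤ) ⋊[permHom] Equiv.Perm X} {g : G} {x : X}
    (hg : φ g = phiGen S hf x) : piMap φ g = Pi.single x 1 := by
  rw [piMap, hg]
  simp [phiGen, tvec]

theorem rightHom_apply_of_eq_inv_fPerm
    {φ : StructureGroup S →* Multiplicative (X → ℤ) ⋊[permHom] Equiv.Perm X}
    (hφ : ∀ x, φ (PresentedGroup.of x) = phiGen S hf x) (x : X) :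
    SemidirectProduct.rightHom.comp φ (PresentedGroup.of x) = (fPerm S hf x)⁻¹ := by
  simp [hφ, phiGen]

end Generators

section Diagonal

variable {S : X × X → X × X}

theorem Nondeg.bijective_fmap (hnd : Nondeg S) (x : X) : Function.Bijective (fmap S x) :=
  (hnd x).1

theorem Nondeg.bijective_gmap (hnd : Nondeg S) (x : X) : Function.Bijective (gmap S x) :=
  (hnd x).2

theorem fmap_eq_iff_gmap_eq (hnd : Nondeg S) (hinv : Involutive S) {x y : X} :
    fmap S x y = x ↔ gmap S y x = y := by
  have hS : S (gmap S y x, fmap S x y) = (y, x) := hinv (y, x)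
  constructor
  · intro h
    rw [h] at hS
    exact (hnd.bijective_fmap x).1 ((congrArg Prod.snd hS).trans h.symm)
  · intro h
    rw [h] at hS
    exact (hnd.bijective_gmap y).1 ((congrArg Prod.fst hS).trans h.symm)

/-- The diagonal map `x ↦ f_x⁻¹(x)`, with inverse `y ↦ g_y⁻¹(y)`. It governs how the
permutation attached to an element of the structure group changes under `shift`. -/
noncomputable def diagPerm (hnd : Nondeg S) (hinv : Involutive S) : Equiv.Perm X where
  toFun x := (fPerm S hnd.bijective_fmap x).symm x
  invFun y := (Equiv.ofBijective _ (hnd.bijective_gmap y)).symm y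
  left_inv x := by
    rw [Equiv.symm_apply_eq]
    exact ((fmap_eq_iff_gmap_eq hnd hinv).1 ((fPerm S _ x).apply_symm_apply x)).symm
  right_inv y := by
    rw [Equiv.symm_apply_eq]
    exact ((fmap_eq_iff_gmap_eq hnd hinv).2
      ((Equiv.ofBijective _ (hnd.bijective_gmap y)).apply_symm_apply y)).symm

end Diagonal

section Shift

variable {S : X × X → X × X}

theorem of_mul_of (x y : X) :
    (PresentedGroup.of x * PresentedGroup.of y : StructureGroup S) =
      PresentedGroup.of (gmap S x y) * PresentedGroup.of (fmap S y x) :=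
  PresentedGroup.mk_eq_mk_of_mul_inv_mem ⟨x, y, rfl⟩

theorem of_fPerm_symm_mul_of (hf : ∀ x, Function.Bijective (fmap S x)) (hinv : Involutive S)
    (x y : X) :
    (PresentedGroup.of ((fPerm S hf x).symm y) * PresentedGroup.of x : StructureGroup S) =
      PresentedGroup.of ((fPerm S hf y).symm x) * PresentedGroup.of y := by
  obtain ⟨z, rfl⟩ := (fPerm S hf x).surjective y
  have hz : (fPerm S hf (fPerm S hf x z)).symm x = gmap S z x := by
    rw [Equiv.symm_apply_eq]
    exact (congrArg Prod.snd (hinv (z, x))).symm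
  rw [Equiv.symm_apply_apply, hz]
  exact of_mul_of z x

variable (hnd : Nondeg S) (hinv : Involutive S) {ρ : StructureGroup S →* Equiv.Perm X}
  (hρ : ∀ x, ρ (PresentedGroup.of x) = (fPerm S hnd.bijective_fmap x)⁻¹)

/-- The permutation `a ↦ ρ(a)(y) a` of the structure group, where `ρ` is the `Sym(X)`-component of
`φ`. The twist by `ρ(a)` makes it the lift along `π` of the translation of `ℤ^X` by `t_y`. -/
noncomputable def shift (y : X) : Equiv.Perm (StructureGroup S) where
  toFun a := PresentedGroup.of (ρ a y) * a
  invFun b := (PresentedGroup.of ((diagPerm hnd hinv).symm (ρ b y)))⁻¹ * b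
  left_inv a := by
    have hdiag : ρ (PresentedGroup.of (ρ a y) * a) y = diagPerm hnd hinv (ρ a y) := by
      rw [map_mul, hρ]
      rfl
    beta_reduce
    rw [hdiag, Equiv.symm_apply_apply, inv_mul_cancel_left]
  right_inv b := by
    obtain ⟨x, hx⟩ := (diagPerm hnd hinv).surjective (ρ b y)
    have hfix : ρ ((PresentedGroup.of x)⁻¹ * b) y = x := by
      rw [map_mul, map_inv, hρ, inv_inv, Equiv.Perm.mul_apply, ← hx]
      exact (fPerm S _ x).apply_symm_apply x
    beta_reduce
    rw [← hx, Equiv.symm_apply_apply, hfix, mul_inv_cancel_left]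

theorem shift_apply (y : X) (a : StructureGroup S) :
    shift hnd hinv hρ y a = PresentedGroup.of (ρ a y) * a := rfl

theorem commute_shift (y z : X) : Commute (shift hnd hinv hρ y) (shift hnd hinv hρ z) := by
  have happly (y z : X) (a : StructureGroup S) :
      shift hnd hinv hρ y (shift hnd hinv hρ z a) =
        PresentedGroup.of ((fPerm S hnd.bijective_fmap (ρ a z)).symm (ρ a y)) *
          PresentedGroup.of (ρ a z) * a := by
    rw [shift_apply, shift_apply, map_mul, hρ, mul_assoc]
    rfl
  ext a
  rw [Equiv.Perm.mul_apply, Equiv.Perm.mul_apply, happly, happly, of_fPerm_symm_mul_of _ hinv]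

theorem of_mul_eq_shift_apply (x : X) (a : StructureGroup S) :
    PresentedGroup.of x * a = shift hnd hinv hρ ((ρ a).symm x) a := by
  rw [shift_apply, Equiv.apply_symm_apply]

theorem exists_mem_closure_shift_apply_one (a : StructureGroup S) :
    ∃ k ∈ Subgroup.closure (Set.range (shift hnd hinv hρ)), k 1 = a := by
  have ha : a ∈ Subgroup.closure (Set.range (PresentedGroup.of (rels := rels S))) := by
    rw [PresentedGroup.closure_range_of]
    exact Subgroup.mem_top a
  have hshift (y : X) : shift hnd hinv hρ y ∈ Subgroup.closure (Set.range (shift hnd hinv hρ)) :=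
    Subgroup.subset_closure ⟨y, rfl⟩
  induction ha using Subgroup.closure_induction_left with
  | one => exact ⟨1, one_mem _, rfl⟩
  | mul_left _ hx _ _ ih =>
    obtain ⟨x, rfl⟩ := hx
    obtain ⟨k, hk, rfl⟩ := ih
    exact ⟨_, mul_mem (hshift _) hk, (of_mul_eq_shift_apply hnd hinv hρ x _).symm⟩
  | inv_mul_cancel _ hx _ _ ih =>
    obtain ⟨x, rfl⟩ := hx
    obtain ⟨k, hk, rfl⟩ := ih
    refine ⟨_, mul_mem (inv_mem (hshift ((ρ ((PresentedGroup.of x)⁻¹ * k 1)).symm x))) hk, ?_⟩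
    rw [Equiv.Perm.mul_apply, Equiv.Perm.inv_eq_iff_eq, ← of_mul_eq_shift_apply,
      mul_inv_cancel_left]

theorem piMap_shift [DecidableEq X]
    {φ : StructureGroup S →* Multiplicative (X → ℤ) ⋊[permHom] Equiv.Perm X}
    (hφ : ∀ x, φ (PresentedGroup.of x) = phiGen S hnd.bijective_fmap x)
    (y : X) (a : StructureGroup S) :
    piMap φ (shift hnd hinv (rightHom_apply_of_eq_inv_fPerm hφ) y a) =
      Pi.single y 1 + piMap φ a := by
  rw [shift_apply, piMap_mul, piMap_eq_single_one_of_eq_phiGen (hφ _), permAddAut_single,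
    map_inv, SemidirectProduct.inv_right]
  exact congrArg (Pi.single · 1 + piMap φ a) (Equiv.symm_apply_apply (φ a).right y)

end Shift

theorem piMap_bijective_cocycle_general [DecidableEq X] (S : X × X → X × X) (hnd : Nondeg S)
    (hinv : Involutive S)
    (φ : StructureGroup S →* Multiplicative (X → ℤ) ⋊[permHom] Equiv.Perm X)
    (hφ : ∀ x : X, φ (PresentedGroup.of x) = phiGen S hnd.bijective_fmap x) :
    Function.Injective (piMap φ) ∧
    Set.range (piMap φ) = {w | (Function.support w).Finite} ∧
    ∀ a₁ a₂ : StructureGroup S,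
      piMap φ (a₁ * a₂) = permAddAut ((φ a₂⁻¹).right) (piMap φ a₁) + piMap φ a₂ := by
  have hρ := rightHom_apply_of_eq_inv_fPerm hφ
  obtain ⟨o, ho, hcomp⟩ := exists_surjective_comp_eq_linearCombination
    (commute_shift hnd hinv hρ) (piMap_shift hnd hinv hφ) (piMap_one φ)
    (exists_mem_closure_shift_apply_one hnd hinv hρ)
  have hinj : Function.Injective (piMap φ ∘ o) :=
    hcomp ▸ Pi.linearIndependent_single_one X ℤ
  have hrange : Set.range (piMap φ) = {w | (Function.support w).Finite} := by
    rw [← ho.range_comp, hcomp, range_linearCombination_single_one]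
  exact ⟨hinj.of_comp_right ho, hrange, piMap_mul φ⟩

/-- The map `π : G(X,S) → ℤ^X` (the `ℤ^X`-component of `φ`) is a
bijection and satisfies the cocycle identity
`π(a₁a₂) = σ(a₂⁻¹)(π(a₁)) + π(a₂)`, where `σ(g)` is the `Sym(X)`-component of
`φ(g)` acting on `ℤ^X` by permuting the basis. -/
theorem piMap_bijective_cocycle {X : Type*} [Fintype X] [DecidableEq X]
    (S : X × X → X × X)
    (hSbij : Function.Bijective S) (hnd : Nondeg S) (hinv : Involutive S)
    (hbr : Braided S)
    (φ : StructureGroup S →* Multiplicative (X → ℤ) ⋊[permHom] Equiv.Perm X)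
    (hφ : ∀ x : X, φ (PresentedGroup.of x) = phiGen S (fun x => (hnd x).1) x) :
    Function.Bijective (piMap φ) ∧
    ∀ a₁ a₂ : StructureGroup S,
      piMap φ (a₁ * a₂) = permAddAut ((φ a₂⁻¹).right) (piMap φ a₁) + piMap φ a₂ := by
  obtain ⟨hinj, hrange, hcocycle⟩ := piMap_bijective_cocycle_general S hnd hinv φ hφ
  exact ⟨⟨hinj, Set.range_eq_univ.1 (hrange.trans (Set.eq_univ_of_forall fun _ => Set.toFinite _))⟩,
    hcocycle⟩

end YB
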